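/- Let A be a commutative ring and let Ǧ(A) be the set of formal Laurent series g = Σ_{k} g_k x^{k+1} ∈ A((x)) such that g_0 is a unit of A and g_k is nilpotent for all k < 0. Then Ǧ(A) is closed under formal composition of series, and composition makes Ǧ(A) a monoid with identity element x. -/

import Mathlib

namespace Tate

/-- The set `Ǧ(A)` of invertible nil-Laurent series: Laurent series
`g = Σ_k g_k x^(k+1)` with `g_0` (the coefficient of `x^1`) a unit of `A` and `g_k`
(the coefficient of `x^(k+1)`, `k < 0`) nilpotent for all `k < 0`. -/
def Gcheck (A : Type*) [CommRing A] : Set (LaurentSeries A) :=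
  {g | IsUnit (g.coeff 1) ∧ ∀ n : ℤ, n ≤ 0 → IsNilpotent (g.coeff n)}

/-- Integer powers of a Laurent series, using the inverse in the Laurent series ring
(`Ring.inverse`, which is the genuine inverse for a unit) for negative exponents. -/
noncomputable def lzpow {A : Type*} [CommRing A] (g : LaurentSeries A) (k : ℤ) :
    LaurentSeries A :=
  if 0 ≤ k then g ^ k.toNat else (Ring.inverse g) ^ (-k).toNat

/-- The coefficient of `x^d` in the formal composite `f ∘ g = Σ_m f_m g^m`
(writing `f = Σ_m f_m x^m`), computed coefficientwise; for `g ∈ Ǧ(A)` only finitely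
many terms contribute to each coefficient, by nilpotence. -/
noncomputable def compCoeff {A : Type*} [CommRing A] (f g : LaurentSeries A) (d : ℤ) : A :=
  ∑ᶠ k : ℤ, f.coeff k * (lzpow g k).coeff d

section helpers

variable {A : Type*} [CommRing A]

/-- Series whose coefficients of index `< a` lie in the ideal `I`. -/
def Fil (I : Ideal A) (a : ℤ) : AddSubgroup (LaurentSeries A) where
  carrier := {f | ∀ d < a, f.coeff d ∈ I}
  zero_mem' := fun d _ => by simp
  add_mem' := fun {f g} hf hg d hd => by
    rw [HahnSeries.coeff_add]; exact I.add_mem (hf d hd) (hg d hd)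
  neg_mem' := fun {f} hf d hd => by
    rw [HahnSeries.coeff_neg]; exact I.neg_mem (hf d hd)

lemma mem_Fil {I : Ideal A} {a : ℤ} {f : LaurentSeries A} :
    f ∈ Fil I a ↔ ∀ d < a, f.coeff d ∈ I := Iff.rfl

lemma Fil_mono {I : Ideal A} {a b : ℤ} (h : b ≤ a) {f : LaurentSeries A} (hf : f ∈ Fil I a) :
    f ∈ Fil I b := fun d hd => hf d (by omega)

lemma Fil_mul {I : Ideal A} {a b : ℤ} {f g : LaurentSeries A} (hf : f ∈ Fil I a)
    (hg : g ∈ Fil I b) : f * g ∈ Fil I (a + b) := by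
  intro d hd
  rw [HahnSeries.coeff_mul]
  refine I.sum_mem fun ij hij => ?_
  have h : ij.1 + ij.2 = d := by
    have := Finset.mem_antidiagonal.1 hij
    exact this.2.2
  by_cases h1 : ij.1 < a
  · exact I.mul_mem_right _ (hf _ h1)
  · exact I.mul_mem_left _ (hg _ (by omega))

lemma Fil_single {I : Ideal A} (k : ℤ) (a : A) : HahnSeries.single k a ∈ Fil I k := by
  intro d hd
  rw [HahnSeries.coeff_single_of_ne (by omega)]
  exact I.zero_mem

lemma Fil_one {I : Ideal A} : (1 : LaurentSeries A) ∈ Fil I 0 := Fil_single 0 1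

lemma exists_Fil (I : Ideal A) (f : LaurentSeries A) : ∃ a : ℤ, f ∈ Fil I a :=
  ⟨f.order, fun d hd => by
    rw [HahnSeries.coeff_eq_zero_of_lt_order hd]; exact I.zero_mem⟩

lemma eq_zero_of_Fil {f : LaurentSeries A} (h : ∀ m, f ∈ Fil ⊥ m) : f = 0 := by
  ext d
  simpa using h (d + 1) d (by omega)

/-- truncation -/
noncomputable def trunc (f : LaurentSeries A) (a m : ℤ) : LaurentSeries A :=
  ∑ k ∈ Finset.Ico a m, HahnSeries.single k (f.coeff k)

lemma coeff_trunc (f : LaurentSeries A) (a m d : ℤ) :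
    (trunc f a m).coeff d = if d ∈ Finset.Ico a m then f.coeff d else 0 := by
  rw [trunc, HahnSeries.coeff_sum]
  simp only [HahnSeries.coeff_single]
  classical
  convert Finset.sum_ite_eq (Finset.Ico a m) d (fun x => f.coeff x)

lemma sub_trunc_mem {f : LaurentSeries A} {a : ℤ} (hf : f ∈ Fil ⊥ a) (m : ℤ) :
    f - trunc f a m ∈ Fil ⊥ m := by
  intro d hd
  rw [HahnSeries.coeff_sub, coeff_trunc]
  split_ifs with h
  · simp
  · have : d < a := by
      rw [Finset.mem_Ico] at h; omega
    simpa using hf d this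

/-- bounded additive maps -/
def Bdd (Φ : LaurentSeries A →+ LaurentSeries A) : Prop :=
  ∃ c : ℤ, ∀ m f, f ∈ Fil ⊥ m → Φ f ∈ Fil ⊥ (m - c)

lemma Bdd.sub {Φ Ψ : LaurentSeries A →+ LaurentSeries A} (h : Bdd Φ) (h' : Bdd Ψ) :
    Bdd (Φ - Ψ) := by
  obtain ⟨c, hc⟩ := h
  obtain ⟨c', hc'⟩ := h'
  refine ⟨max c c', fun m f hf => ?_⟩
  rw [AddMonoidHom.sub_apply]
  exact sub_mem (Fil_mono (by omega) (hc m f hf)) (Fil_mono (by omega) (hc' m f hf))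

lemma Bdd.comp {Φ Ψ : LaurentSeries A →+ LaurentSeries A} (h : Bdd Φ) (h' : Bdd Ψ) :
    Bdd (Φ.comp Ψ) := by
  obtain ⟨c, hc⟩ := h
  obtain ⟨c', hc'⟩ := h'
  refine ⟨c' + c, fun m f hf => ?_⟩
  exact Fil_mono (by omega) (hc _ _ (hc' m f hf))

lemma Bdd.mulLeft (y : LaurentSeries A) : Bdd (AddMonoidHom.mulLeft y) := by
  obtain ⟨a, ha⟩ := exists_Fil ⊥ y
  refine ⟨-a, fun m f hf => ?_⟩
  exact Fil_mono (by omega) (Fil_mul ha hf)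

lemma Bdd.id : Bdd (AddMonoidHom.id (LaurentSeries A)) :=
  ⟨0, fun m f hf => Fil_mono (by omega) hf⟩

lemma Bdd.ext {Φ Ψ : LaurentSeries A →+ LaurentSeries A} (h : Bdd Φ) (h' : Bdd Ψ)
    (hs : ∀ k a, Φ (HahnSeries.single k a) = Ψ (HahnSeries.single k a)) (f : LaurentSeries A) :
    Φ f = Ψ f := by
  rw [← sub_eq_zero, ← AddMonoidHom.sub_apply]
  obtain ⟨c, hc⟩ := h.sub h'
  obtain ⟨a, ha⟩ := exists_Fil ⊥ f
  apply eq_zero_of_Fil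
  intro m
  have h1 := hc (m + c) _ (sub_trunc_mem ha (m + c))
  have h2 : (Φ - Ψ) (trunc f a (m + c)) = 0 := by
    rw [trunc, map_sum]
    exact Finset.sum_eq_zero fun k _ => by
      rw [AddMonoidHom.sub_apply, hs, sub_self]
  rw [map_sub, h2, sub_zero] at h1
  exact Fil_mono (by omega) h1

/-- uniform bound for the powers -/
def PB (u : (LaurentSeries A)ˣ) (c : ℤ) : Prop :=
  ∀ k : ℤ, ((u ^ k : (LaurentSeries A)ˣ) : LaurentSeries A) ∈ Fil ⊥ (k - c)

lemma lzpow_unit (u : (LaurentSeries A)ˣ) (k : ℤ) :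
    lzpow (u : LaurentSeries A) k = ((u ^ k : (LaurentSeries A)ˣ) : LaurentSeries A) := by
  unfold lzpow
  split_ifs with h
  · obtain ⟨n, rfl⟩ := Int.eq_ofNat_of_zero_le h
    simp
  · obtain ⟨n, hn⟩ := Int.eq_ofNat_of_zero_le (show 0 ≤ -k by omega)
    obtain rfl : k = -(n : ℤ) := by omega
    simp [Ring.inverse_unit]

lemma PB.finite {u : (LaurentSeries A)ˣ} {c : ℤ} (hu : PB u c) (f : LaurentSeries A) (d : ℤ) :
    (Function.support fun k : ℤ => f.coeff k * (lzpow (u : LaurentSeries A) k).coeff d).Finite := by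
  obtain ⟨a, ha⟩ := exists_Fil ⊥ f
  refine (Set.finite_Icc a (d + c)).subset fun k hk => ?_
  rw [Function.mem_support] at hk
  constructor
  · by_contra h
    apply hk
    have := ha k (by omega)
    rw [Ideal.mem_bot] at this
    rw [this, zero_mul]
  · by_contra h
    apply hk
    have := hu k d (by omega)
    rw [Ideal.mem_bot] at this
    rw [lzpow_unit, this, mul_zero]

lemma PB.compCoeff_zero {u : (LaurentSeries A)ˣ} {c : ℤ} (hu : PB u c) {f : LaurentSeries A}
    {m : ℤ} (hf : f ∈ Fil ⊥ m) (d : ℤ) (hd : d < m - c) :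
    compCoeff f (u : LaurentSeries A) d = 0 := by
  unfold compCoeff
  rw [finsum_eq_zero_of_forall_eq_zero]
  intro k
  by_cases h : k < m
  · have := hf k h
    rw [Ideal.mem_bot] at this
    rw [this, zero_mul]
  · have := hu k d (by omega)
    rw [Ideal.mem_bot] at this
    rw [lzpow_unit, this, mul_zero]

/-- composition with `u` -/
noncomputable def Phi (u : (LaurentSeries A)ˣ) (c : ℤ) (hu : PB u c) :
    LaurentSeries A →+ LaurentSeries A :=
  AddMonoidHom.mk' (fun f => HahnSeries.ofSuppBddBelow (compCoeff f (u : LaurentSeries A)) (by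
    obtain ⟨a, ha⟩ := exists_Fil ⊥ f
    refine ⟨a - c, fun d hd => ?_⟩
    by_contra h
    exact hd (hu.compCoeff_zero ha d (by omega)))) (by
    intro f g
    ext d
    simp only [HahnSeries.coeff_add, HahnSeries.coeff_ofSuppBddBelow]
    unfold compCoeff
    rw [← finsum_add_distrib (hu.finite f d) (hu.finite g d)]
    simp only [HahnSeries.coeff_add, add_mul])

lemma coeff_Phi {u : (LaurentSeries A)ˣ} {c : ℤ} (hu : PB u c) (f : LaurentSeries A) (d : ℤ) :
    (Phi u c hu f).coeff d = compCoeff f (u : LaurentSeries A) d := by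
  simp [Phi]

lemma Phi_bdd {u : (LaurentSeries A)ˣ} {c : ℤ} (hu : PB u c) : Bdd (Phi u c hu) :=
  ⟨c, fun m f hf d hd => by
    rw [coeff_Phi, hu.compCoeff_zero hf d hd]; exact Ideal.zero_mem _⟩

lemma Phi_single {u : (LaurentSeries A)ˣ} {c : ℤ} (hu : PB u c) (k : ℤ) (a : A) :
    Phi u c hu (HahnSeries.single k a) =
      HahnSeries.single 0 a * ((u ^ k : (LaurentSeries A)ˣ) : LaurentSeries A) := by
  ext d
  rw [coeff_Phi, HahnSeries.coeff_single_zero_mul, compCoeff, finsum_eq_single _ k]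
  · rw [HahnSeries.coeff_single_same, lzpow_unit]
  · intro j hj
    rw [HahnSeries.coeff_single_of_ne hj, zero_mul]

lemma Phi_mul {u : (LaurentSeries A)ˣ} {c : ℤ} (hu : PB u c) (f g : LaurentSeries A) :
    Phi u c hu (f * g) = Phi u c hu f * Phi u c hu g := by
  have key : ∀ (k : ℤ) (a : A) (g : LaurentSeries A),
      Phi u c hu (HahnSeries.single k a * g) =
        Phi u c hu (HahnSeries.single k a) * Phi u c hu g := by
    intro k a g
    refine Bdd.ext (Φ := (Phi u c hu).comp (AddMonoidHom.mulLeft (HahnSeries.single k a)))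
      (Ψ := (AddMonoidHom.mulLeft (Phi u c hu (HahnSeries.single k a))).comp (Phi u c hu))
      ((Phi_bdd hu).comp (Bdd.mulLeft _)) ((Bdd.mulLeft _).comp (Phi_bdd hu)) ?_ g
    intro l b
    simp only [AddMonoidHom.comp_apply, AddMonoidHom.coe_mulLeft]
    rw [HahnSeries.single_mul_single, Phi_single, Phi_single, Phi_single, zpow_add, Units.val_mul]
    have : (HahnSeries.single (0 : ℤ) (a * b) : LaurentSeries A) =
        HahnSeries.single 0 a * HahnSeries.single 0 b := by
      rw [HahnSeries.single_mul_single, add_zero]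
    rw [this]
    ring
  rw [mul_comm f g, mul_comm (Phi u c hu f)]
  refine Bdd.ext (Φ := (Phi u c hu).comp (AddMonoidHom.mulLeft g))
      (Ψ := (AddMonoidHom.mulLeft (Phi u c hu g)).comp (Phi u c hu))
      ((Phi_bdd hu).comp (Bdd.mulLeft _)) ((Bdd.mulLeft _).comp (Phi_bdd hu)) ?_ f
  intro l b
  simp only [AddMonoidHom.comp_apply, AddMonoidHom.coe_mulLeft]
  rw [mul_comm, key, mul_comm]

lemma Phi_one {u : (LaurentSeries A)ˣ} {c : ℤ} (hu : PB u c) : Phi u c hu 1 = 1 := by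
  have := Phi_single hu 0 (1 : A)
  rw [zpow_zero, Units.val_one, mul_one] at this
  exact this

/-- `Phi` as a monoid hom -/
noncomputable def PhiHom (u : (LaurentSeries A)ˣ) (c : ℤ) (hu : PB u c) :
    LaurentSeries A →* LaurentSeries A where
  toFun := Phi u c hu
  map_one' := Phi_one hu
  map_mul' := Phi_mul hu

lemma Phi_zpow {u : (LaurentSeries A)ˣ} {c : ℤ} (hu : PB u c) (g v : (LaurentSeries A)ˣ)
    (hv : Phi u c hu (g : LaurentSeries A) = v) (k : ℤ) :
    Phi u c hu ((g ^ k : (LaurentSeries A)ˣ) : LaurentSeries A) =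
      ((v ^ k : (LaurentSeries A)ˣ) : LaurentSeries A) := by
  have h : Units.map (PhiHom u c hu) g = v := Units.ext hv
  rw [← h, ← map_zpow]
  rfl

lemma zpow_mem_of_base {p : (LaurentSeries A)ˣ} (h1 : (p : LaurentSeries A) ∈ Fil (⊥ : Ideal A) 1)
    (h2 : ((p⁻¹ : (LaurentSeries A)ˣ) : LaurentSeries A) ∈ Fil (⊥ : Ideal A) (-1)) (k : ℤ) :
    ((p ^ k : (LaurentSeries A)ˣ) : LaurentSeries A) ∈ Fil (⊥ : Ideal A) k := by
  induction k using Int.induction_on with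
  | zero => simpa using Fil_one
  | succ i ih =>
    rw [zpow_add_one, Units.val_mul]
    exact Fil_mul ih h1
  | pred i ih =>
    rw [zpow_sub_one, Units.val_mul]
    exact Fil_mono (by omega) (Fil_mul ih h2)

lemma nil_bound {n : LaurentSeries A} (hn : IsNilpotent n) :
    ∃ c : ℤ, ∀ j : ℕ, n ^ j ∈ Fil (⊥ : Ideal A) (-c) := by
  obtain ⟨N, hN⟩ := hn
  obtain ⟨a, ha⟩ : ∃ a : ℤ, a ≤ 0 ∧ n ∈ Fil (⊥ : Ideal A) a := by
    obtain ⟨a, ha⟩ := exists_Fil ⊥ n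
    exact ⟨min a 0, by omega, Fil_mono (by omega) ha⟩
  have h : ∀ j : ℕ, n ^ j ∈ Fil (⊥ : Ideal A) (j * a) := by
    intro j
    induction j with
    | zero => simpa using Fil_one
    | succ j ih =>
      rw [pow_succ]
      refine Fil_mono (le_of_eq ?_) (Fil_mul ih ha.2)
      push_cast; ring
  refine ⟨-(N * a), fun j => ?_⟩
  by_cases hj : j < N
  · refine Fil_mono ?_ (h j)
    have : (j : ℤ) ≤ N := by omega
    nlinarith [ha.1]
  · rw [pow_eq_zero_of_le (by omega) hN]
    exact zero_mem _

lemma one_add_bound {n : LaurentSeries A} (hn : IsNilpotent n) (w : (LaurentSeries A)ˣ)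
    (hw : (w : LaurentSeries A) = 1 + n) :
    ∃ c : ℤ, ∀ k : ℤ, ((w ^ k : (LaurentSeries A)ˣ) : LaurentSeries A) ∈ Fil (⊥ : Ideal A) (-c) := by
  obtain ⟨c, hc⟩ := nil_bound hn
  obtain ⟨N, hN⟩ := hn
  have hinv : ((w⁻¹ : (LaurentSeries A)ˣ) : LaurentSeries A) = ∑ i ∈ Finset.range N, (-n) ^ i := by
    have h1 : (w : LaurentSeries A) * ∑ i ∈ Finset.range N, (-n) ^ i = 1 := by
      have := mul_neg_geom_sum (-n) N
      rw [sub_neg_eq_add, neg_pow n N, hN, mul_zero, sub_zero] at this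
      rw [hw, this]
    exact (Units.inv_eq_of_mul_eq_one_right h1)
  have key : ∀ k : ℤ, ∀ j : ℕ,
      ((w ^ k : (LaurentSeries A)ˣ) : LaurentSeries A) * n ^ j ∈ Fil (⊥ : Ideal A) (-c) := by
    intro k
    induction k using Int.induction_on with
    | zero => intro j; simpa using hc j
    | succ i ih =>
      intro j
      rw [zpow_add_one, Units.val_mul, hw, mul_assoc, add_mul, one_mul, ← pow_succ', mul_add]
      exact add_mem (ih j) (ih (j + 1))
    | pred i ih =>
      intro j
      rw [zpow_sub_one, Units.val_mul, hinv, mul_assoc, Finset.sum_mul, Finset.mul_sum]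
      refine sum_mem fun l _ => ?_
      rw [neg_pow, mul_assoc, ← pow_add]
      rcases neg_one_pow_eq_or (LaurentSeries A) l with h | h
      · rw [h, one_mul]; exact ih _
      · rw [h, neg_one_mul, mul_neg]; exact neg_mem (ih _)
  exact ⟨c, fun k => by simpa using key k 0⟩

lemma base_unit {p : LaurentSeries A} (hp : p ∈ Fil (⊥ : Ideal A) 1) (h1 : IsUnit (p.coeff 1)) :
    ∃ u : (LaurentSeries A)ˣ, (u : LaurentSeries A) = p ∧
      ((u⁻¹ : (LaurentSeries A)ˣ) : LaurentSeries A) ∈ Fil (⊥ : Ideal A) (-1) := by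
  let q : PowerSeries A := PowerSeries.mk fun n => p.coeff (n + 1)
  have hq : IsUnit q := by
    rw [PowerSeries.isUnit_iff_constantCoeff]
    simpa [q] using h1
  obtain ⟨v, hv⟩ := hq
  have hpos : ∀ r : PowerSeries A, HahnSeries.ofPowerSeries ℤ A r ∈ Fil (⊥ : Ideal A) 0 := by
    intro r d hd
    rw [PowerSeries.coeff_coe, if_pos hd]
    exact Ideal.zero_mem _
  have hpq : p = HahnSeries.single (1 : ℤ) (1 : A) * HahnSeries.ofPowerSeries ℤ A q := by
    ext d
    rw [HahnSeries.coeff_single_mul, one_mul, PowerSeries.coeff_coe]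
    split_ifs with h
    · simpa using hp d (by omega)
    · simp only [q, PowerSeries.coeff_mk]
      congr 1
      omega
  have hm : p * (HahnSeries.single (-1 : ℤ) (1 : A) *
      HahnSeries.ofPowerSeries ℤ A ((v⁻¹ : (PowerSeries A)ˣ) : PowerSeries A)) = 1 := by
    rw [hpq, mul_mul_mul_comm, HahnSeries.single_mul_single, ← map_mul, ← hv, Units.mul_inv]
    simp
  refine ⟨Units.mkOfMulEqOne _ _ hm, rfl, ?_⟩
  exact Fil_mul (a := -1) (b := 0) (Fil_single _ _) (hpos _)

lemma Gcheck_unit {g : LaurentSeries A} (hg : g ∈ Gcheck A) :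
    ∃ (u : (LaurentSeries A)ˣ) (c : ℤ), (u : LaurentSeries A) = g ∧ PB u c := by
  obtain ⟨a, ha⟩ := exists_Fil ⊥ g
  have hp := sub_trunc_mem ha 1
  have hp1 : IsUnit ((g - trunc g a 1).coeff 1) := by
    rw [HahnSeries.coeff_sub, coeff_trunc, if_neg (by simp), sub_zero]
    exact hg.1
  have hn : IsNilpotent (trunc g a 1) := by
    refine isNilpotent_sum fun k hk => ?_
    rw [Finset.mem_Ico] at hk
    obtain ⟨N, hN⟩ := hg.2 k (by omega)
    exact ⟨N, by rw [HahnSeries.single_pow, hN, map_zero]⟩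
  obtain ⟨u, hu, hu'⟩ := base_unit hp hp1
  have hn' : IsNilpotent (((u⁻¹ : (LaurentSeries A)ˣ) : LaurentSeries A) * trunc g a 1) :=
    (Commute.all _ _).isNilpotent_mul_left hn
  obtain ⟨w, hw⟩ := hn'.isUnit_one_add
  obtain ⟨c, hc⟩ := one_add_bound hn' w hw
  refine ⟨u * w, c, ?_, fun k => ?_⟩
  · rw [Units.val_mul, hw, mul_add, mul_one, Units.mul_inv_cancel_left, hu, sub_add_cancel]
  · rw [mul_zpow, Units.val_mul]
    exact Fil_mul (zpow_mem_of_base (hu ▸ hp) hu' k) (hc k)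

lemma pow_nil {g : LaurentSeries A} (hg : g ∈ Gcheck A) (k : ℕ) :
    g ^ k ∈ Fil (nilradical A) k := by
  induction k with
  | zero => simpa using Fil_one
  | succ k ih =>
    rw [pow_succ]
    have : g ∈ Fil (nilradical A) 1 := fun d hd => mem_nilradical.2 (hg.2 d (by omega))
    exact_mod_cast Fil_mul ih this

lemma term_nil {f g : LaurentSeries A} (hf : f ∈ Gcheck A) (hg : g ∈ Gcheck A) (d k : ℤ)
    (h : k ≤ 0 ∨ d < k) : f.coeff k * (lzpow g k).coeff d ∈ nilradical A := by
  by_cases hk : k ≤ 0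
  · exact Ideal.mul_mem_right _ _ (mem_nilradical.2 (hf.2 k hk))
  · refine Ideal.mul_mem_left _ _ ?_
    have h0 : 0 ≤ k := by omega
    rw [lzpow, if_pos h0]
    exact pow_nil hg _ d (by omega)

lemma comp_mem {f : LaurentSeries A} {u : (LaurentSeries A)ˣ} {c : ℤ} (hf : f ∈ Gcheck A)
    (hg : (u : LaurentSeries A) ∈ Gcheck A) (hu : PB u c) : Phi u c hu f ∈ Gcheck A := by
  constructor
  · rw [coeff_Phi, compCoeff, finsum_eq_sum_of_support_subset _
      (s := insert 1 (hu.finite f 1).toFinset) (by intro x hx; simp at hx ⊢; tauto),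
      ← Finset.add_sum_erase _ _ (Finset.mem_insert_self _ _)]
    refine IsNilpotent.isUnit_add_left_of_commute ?_ ?_ (Commute.all _ _)
    · rw [← mem_nilradical]
      refine Ideal.sum_mem _ fun k hk => ?_
      have := (Finset.mem_erase.1 hk).1
      exact term_nil hf hg 1 k (by omega)
    · rw [lzpow_unit, zpow_one]
      exact hf.1.mul hg.1
  · intro d hd
    rw [coeff_Phi, compCoeff, finsum_eq_sum _ (hu.finite f d), ← mem_nilradical]
    exact Ideal.sum_mem _ fun k _ => term_nil hf hg d k (by omega)

lemma X_mem : HahnSeries.single (1 : ℤ) (1 : A) ∈ Gcheck A := by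
  constructor
  · simp
  · intro n hn
    rw [HahnSeries.coeff_single_of_ne (by omega)]
    exact IsNilpotent.zero

lemma X_zpow (u : (LaurentSeries A)ˣ) (hu : (u : LaurentSeries A) = HahnSeries.single (1 : ℤ) (1 : A))
    (k : ℤ) : ((u ^ k : (LaurentSeries A)ˣ) : LaurentSeries A) = HahnSeries.single k (1 : A) := by
  have hinv : ((u⁻¹ : (LaurentSeries A)ˣ) : LaurentSeries A) = HahnSeries.single (-1 : ℤ) (1 : A) := by
    apply Units.inv_eq_of_mul_eq_one_right
    rw [hu, HahnSeries.single_mul_single]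
    simp
  induction k using Int.induction_on with
  | zero => simp
  | succ i ih =>
    rw [zpow_add_one, Units.val_mul, ih, hu, HahnSeries.single_mul_single, one_mul]
  | pred i ih =>
    rw [zpow_sub_one, Units.val_mul, ih, hinv, HahnSeries.single_mul_single, one_mul, sub_eq_add_neg]

end helpers

/-- `Ǧ(A)` is closed under formal composition of series, and composition makes
`Ǧ(A)` a monoid with identity element `x`. -/
theorem Gcheck_monoid_under_composition (A : Type*) [CommRing A] :
    -- closure: the composite of two elements of `Ǧ(A)` is again a Laurent series in `Ǧ(A)`
    (∀ f ∈ Gcheck A, ∀ g ∈ Gcheck A, ∃ h ∈ Gcheck A, ∀ d : ℤ, h.coeff d = compCoeff f g d) ∧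
    -- associativity of composition
    (∀ f g h fg gh : LaurentSeries A, f ∈ Gcheck A → g ∈ Gcheck A → h ∈ Gcheck A →
      (∀ d : ℤ, fg.coeff d = compCoeff f g d) → (∀ d : ℤ, gh.coeff d = compCoeff g h d) →
      ∀ d : ℤ, compCoeff fg h d = compCoeff f gh d) ∧
    -- the series `x` lies in `Ǧ(A)` and is a two-sided identity for composition
    (HahnSeries.single (1 : ℤ) (1 : A) ∈ Gcheck A) ∧
    (∀ f ∈ Gcheck A,
      (∀ d : ℤ, compCoeff f (HahnSeries.single (1 : ℤ) (1 : A)) d = f.coeff d) ∧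
      (∀ d : ℤ, compCoeff (HahnSeries.single (1 : ℤ) (1 : A)) f d = f.coeff d)) := by
  refine ⟨?_, ?_, X_mem, ?_⟩
  · intro f hf g hg
    obtain ⟨u, c, rfl, hu⟩ := Gcheck_unit hg
    exact ⟨_, comp_mem hf hg hu, coeff_Phi hu f⟩
  · intro f g h fg gh hf hg hh hfg hgh d
    obtain ⟨u, c, rfl, hu⟩ := Gcheck_unit hg
    obtain ⟨v, e, rfl, hv⟩ := Gcheck_unit hh
    obtain rfl : fg = Phi u c hu f := by
      ext d; rw [hfg, coeff_Phi]
    have hgh' : gh = Phi v e hv u := by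
      ext d; rw [hgh, coeff_Phi]
    have hm : gh ∈ Gcheck A := hgh' ▸ comp_mem hg hh hv
    obtain ⟨w, b, rfl, hw⟩ := Gcheck_unit hm
    rw [← coeff_Phi hv, ← coeff_Phi hw]
    congr 1
    refine Bdd.ext (Φ := (Phi v e hv).comp (Phi u c hu)) (Ψ := Phi w b hw)
      ((Phi_bdd hv).comp (Phi_bdd hu)) (Phi_bdd hw) ?_ f
    intro k a
    rw [AddMonoidHom.comp_apply, Phi_single, Phi_single, Phi_mul, Phi_single,
      Phi_zpow hv u w hgh'.symm, zpow_zero, Units.val_one, mul_one]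
  · intro f hf
    constructor
    · intro d
      obtain ⟨u, c, hux, hu⟩ := Gcheck_unit (X_mem (A := A))
      rw [← hux, ← coeff_Phi hu]
      congr 1
      refine Bdd.ext (Ψ := AddMonoidHom.id _) (Phi_bdd hu) Bdd.id ?_ f
      intro k a
      rw [Phi_single, X_zpow u hux, HahnSeries.single_mul_single, zero_add, mul_one]
      rfl
    · intro d
      obtain ⟨u, c, rfl, hu⟩ := Gcheck_unit hf
      rw [← coeff_Phi hu, Phi_single, zpow_one, HahnSeries.coeff_single_zero_mul, one_mul]

end Tate
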